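/- Let p1, p2, p3 be pairwise distinct reals and q1, q2, q3 pairwise distinct reals such that p_i ≠ q_j for all i, j, and let X1, X2, X3 ∈ S. Assume that every α-factor occurring in the compositions below is well defined and nonzero (i.e., each quantity 1 − ((p_i−q_i)(p_j−q_j))/((p_j−p_i)(q_j−q_i))·tr(K Y_i K Y_j) appearing is nonzero). Then R satisfies the Yang–Baxter equation: applying R(p1,q1;p2,q2) to the components (1,2), then R(p1,q1;p3,q3) to the components (1,3), then R(p2,q2;p3,q3) to the components (2,3) of the triple (X1,X2,X3) gives the same result as applying first R(p2,q2;p3,q3) to components (2,3), then R(p1,q1;p3,q3) to components (1,3), then R(p1,q1;p2,q2) to components (1,2). -/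

import Mathlib

open Matrix

/-- The space of real `m × n` matrices. -/
abbrev Mat (m n : ℕ) := Matrix (Fin m) (Fin n) ℝ

/-- `X` is a rank-one `K`-projection, i.e. `X ∈ S`. -/
def InS {m n : ℕ} (K : Matrix (Fin n) (Fin m) ℝ) (X : Mat m n) : Prop :=
  X * K * X = X ∧ X.rank = 1

/-- `A(p,q,λ,X) = 1ₘ − ((p−q)/(λ−q)) X K`. -/
noncomputable def Amat {m n : ℕ} (K : Matrix (Fin n) (Fin m) ℝ) (p q lam : ℝ) (X : Mat m n) :
    Matrix (Fin m) (Fin m) ℝ :=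
  1 - ((p - q) / (lam - q)) • (X * K)

/-- `Ã(p,q,λ,X) = 1ₙ − ((p−q)/(λ−q)) K X`. -/
noncomputable def Atil {m n : ℕ} (K : Matrix (Fin n) (Fin m) ℝ) (p q lam : ℝ) (X : Mat m n) :
    Matrix (Fin n) (Fin n) ℝ :=
  1 - ((p - q) / (lam - q)) • (K * X)

/-- `B(p,q,λ,X) = 1ₘ + ((p−q)/(λ−p)) X K`. -/
noncomputable def Bmat {m n : ℕ} (K : Matrix (Fin n) (Fin m) ℝ) (p q lam : ℝ) (X : Mat m n) :
    Matrix (Fin m) (Fin m) ℝ :=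
  1 + ((p - q) / (lam - p)) • (X * K)

/-- `B̃(p,q,λ,X) = 1ₙ + ((p−q)/(λ−p)) K X`. -/
noncomputable def Btil {m n : ℕ} (K : Matrix (Fin n) (Fin m) ℝ) (p q lam : ℝ) (X : Mat m n) :
    Matrix (Fin n) (Fin n) ℝ :=
  1 + ((p - q) / (lam - p)) • (K * X)

/-- `α₁₂⁻¹ = 1 − ((p1−q1)(p2−q2))/((p2−p1)(q2−q1)) · tr(K X1 K X2)`. -/
noncomputable def adenom {m n : ℕ} (K : Matrix (Fin n) (Fin m) ℝ) (p1 q1 p2 q2 : ℝ)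
    (X1 X2 : Mat m n) : ℝ :=
  1 - (p1 - q1) * (p2 - q2) / ((p2 - p1) * (q2 - q1)) * (K * X1 * K * X2).trace

/-- The Yang–Baxter map `R(p1,q1;p2,q2)`. -/
noncomputable def Rmap {m n : ℕ} (K : Matrix (Fin n) (Fin m) ℝ) (p1 q1 p2 q2 : ℝ)
    (X : Mat m n × Mat m n) : Mat m n × Mat m n :=
  ((adenom K p1 q1 p2 q2 X.1 X.2)⁻¹ •
      ((1 - ((p2 - q2) / (p2 - p1)) • (X.2 * K)) * X.1 *
        (1 - ((p2 - q2) / (q1 - q2)) • (K * X.2))),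
   (adenom K p1 q1 p2 q2 X.1 X.2)⁻¹ •
      ((1 - ((p1 - q1) / (q2 - q1)) • (X.1 * K)) * X.2 *
        (1 - ((p1 - q1) / (p1 - p2)) • (K * X.1))))

/-- Trace denominator of the first component of the map `T`:
`tr[A₂(p1,X2) X1 B̃₂(q1,X2) K]`. -/
noncomputable def Tden1 {m n : ℕ} (K : Matrix (Fin n) (Fin m) ℝ) (p1 q1 p2 q2 : ℝ)
    (X1 X2 : Mat m n) : ℝ :=
  (Amat K p2 q2 p1 X2 * X1 * Btil K p2 q2 q1 X2 * K).trace

/-- Trace denominator of the second component of the map `T`: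
`tr[A₁(p2,X1) X2 B̃₁(q2,X1) K]`. -/
noncomputable def Tden2 {m n : ℕ} (K : Matrix (Fin n) (Fin m) ℝ) (p1 q1 p2 q2 : ℝ)
    (X1 X2 : Mat m n) : ℝ :=
  (Amat K p1 q1 p2 X1 * X2 * Btil K p1 q1 q2 X1 * K).trace

/-- The (non-Yang–Baxter) map `T(p1,q1;p2,q2)`. -/
noncomputable def Tmap {m n : ℕ} (K : Matrix (Fin n) (Fin m) ℝ) (p1 q1 p2 q2 : ℝ)
    (X : Mat m n × Mat m n) : Mat m n × Mat m n :=
  ((Tden1 K p1 q1 p2 q2 X.1 X.2)⁻¹ • (Amat K p2 q2 p1 X.2 * X.1 * Btil K p2 q2 q1 X.2),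
   (Tden2 K p1 q1 p2 q2 X.1 X.2)⁻¹ • (Amat K p1 q1 p2 X.1 * X.2 * Btil K p1 q1 q2 X.1))

/-- Trace denominator of the first component of `T⁻¹`: `tr[B₂(q1,X2) X1 Ã₂(p1,X2) K]`. -/
noncomputable def Tinvden1 {m n : ℕ} (K : Matrix (Fin n) (Fin m) ℝ) (p1 q1 p2 q2 : ℝ)
    (X1 X2 : Mat m n) : ℝ :=
  (Bmat K p2 q2 q1 X2 * X1 * Atil K p2 q2 p1 X2 * K).trace

/-- Trace denominator of the second component of `T⁻¹`: `tr[B₁(q2,X1) X2 Ã₁(p2,X1) K]`. -/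
noncomputable def Tinvden2 {m n : ℕ} (K : Matrix (Fin n) (Fin m) ℝ) (p1 q1 p2 q2 : ℝ)
    (X1 X2 : Mat m n) : ℝ :=
  (Bmat K p1 q1 q2 X1 * X2 * Atil K p1 q1 p2 X1 * K).trace

/-- The map `Tinv(p1,q1;p2,q2)`, the inverse of `T(p1,q1;p2,q2)`. -/
noncomputable def Tinvmap {m n : ℕ} (K : Matrix (Fin n) (Fin m) ℝ) (p1 q1 p2 q2 : ℝ)
    (X : Mat m n × Mat m n) : Mat m n × Mat m n :=
  ((Tinvden1 K p1 q1 p2 q2 X.1 X.2)⁻¹ • (Bmat K p2 q2 q1 X.2 * X.1 * Atil K p2 q2 p1 X.2),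
   (Tinvden2 K p1 q1 p2 q2 X.1 X.2)⁻¹ • (Bmat K p1 q1 q2 X.1 * X.2 * Atil K p1 q1 p2 X.1))

/-- Trace denominator of the first component of `R⁻¹`: `tr[A₂(q1,X2) X1 B̃₂(p1,X2) K]`. -/
noncomputable def Rinvden1 {m n : ℕ} (K : Matrix (Fin n) (Fin m) ℝ) (p1 q1 p2 q2 : ℝ)
    (X1 X2 : Mat m n) : ℝ :=
  (Amat K p2 q2 q1 X2 * X1 * Btil K p2 q2 p1 X2 * K).trace

/-- Trace denominator of the second component of `R⁻¹`: `tr[B₁(p2,X1) X2 Ã₁(q2,X1) K]`. -/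
noncomputable def Rinvden2 {m n : ℕ} (K : Matrix (Fin n) (Fin m) ℝ) (p1 q1 p2 q2 : ℝ)
    (X1 X2 : Mat m n) : ℝ :=
  (Bmat K p1 q1 p2 X1 * X2 * Atil K p1 q1 q2 X1 * K).trace

/-- The map `Rinv(p1,q1;p2,q2)`, the inverse of `R(p1,q1;p2,q2)`. -/
noncomputable def Rinvmap {m n : ℕ} (K : Matrix (Fin n) (Fin m) ℝ) (p1 q1 p2 q2 : ℝ)
    (X : Mat m n × Mat m n) : Mat m n × Mat m n :=
  ((Rinvden1 K p1 q1 p2 q2 X.1 X.2)⁻¹ • (Amat K p2 q2 q1 X.2 * X.1 * Btil K p2 q2 p1 X.2),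
   (Rinvden2 K p1 q1 p2 q2 X.1 X.2)⁻¹ • (Bmat K p1 q1 p2 X.1 * X.2 * Atil K p1 q1 q2 X.1))

/-- `R` acting on components 1 and 2 of a triple. -/
noncomputable def R12t {m n : ℕ} (K : Matrix (Fin n) (Fin m) ℝ) (p1 q1 p2 q2 : ℝ)
    (X : Mat m n × Mat m n × Mat m n) : Mat m n × Mat m n × Mat m n :=
  ((Rmap K p1 q1 p2 q2 (X.1, X.2.1)).1, (Rmap K p1 q1 p2 q2 (X.1, X.2.1)).2, X.2.2)

/-- `R` acting on components 1 and 3 of a triple. -/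
noncomputable def R13t {m n : ℕ} (K : Matrix (Fin n) (Fin m) ℝ) (p1 q1 p3 q3 : ℝ)
    (X : Mat m n × Mat m n × Mat m n) : Mat m n × Mat m n × Mat m n :=
  ((Rmap K p1 q1 p3 q3 (X.1, X.2.2)).1, X.2.1, (Rmap K p1 q1 p3 q3 (X.1, X.2.2)).2)

/-- `R` acting on components 2 and 3 of a triple. -/
noncomputable def R23t {m n : ℕ} (K : Matrix (Fin n) (Fin m) ℝ) (p2 q2 p3 q3 : ℝ)
    (X : Mat m n × Mat m n × Mat m n) : Mat m n × Mat m n × Mat m n :=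
  (X.1, Rmap K p2 q2 p3 q3 (X.2.1, X.2.2))

/-- `T` acting on components 1 and 2 of a triple. -/
noncomputable def T12t {m n : ℕ} (K : Matrix (Fin n) (Fin m) ℝ) (p1 q1 p2 q2 : ℝ)
    (X : Mat m n × Mat m n × Mat m n) : Mat m n × Mat m n × Mat m n :=
  ((Tmap K p1 q1 p2 q2 (X.1, X.2.1)).1, (Tmap K p1 q1 p2 q2 (X.1, X.2.1)).2, X.2.2)

/-- `T` acting on components 1 and 3 of a triple. -/
noncomputable def T13t {m n : ℕ} (K : Matrix (Fin n) (Fin m) ℝ) (p1 q1 p3 q3 : ℝ)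
    (X : Mat m n × Mat m n × Mat m n) : Mat m n × Mat m n × Mat m n :=
  ((Tmap K p1 q1 p3 q3 (X.1, X.2.2)).1, X.2.1, (Tmap K p1 q1 p3 q3 (X.1, X.2.2)).2)

/-- `T` acting on components 2 and 3 of a triple. -/
noncomputable def T23t {m n : ℕ} (K : Matrix (Fin n) (Fin m) ℝ) (p2 q2 p3 q3 : ℝ)
    (X : Mat m n × Mat m n × Mat m n) : Mat m n × Mat m n × Mat m n :=
  (X.1, Tmap K p2 q2 p3 q3 (X.2.1, X.2.2))

/-- `T⁻¹` acting on components 2 and 3 of a triple. -/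
noncomputable def Tinv23t {m n : ℕ} (K : Matrix (Fin n) (Fin m) ℝ) (p2 q2 p3 q3 : ℝ)
    (X : Mat m n × Mat m n × Mat m n) : Mat m n × Mat m n × Mat m n :=
  (X.1, Tinvmap K p2 q2 p3 q3 (X.2.1, X.2.2))

/-- `R⁻¹` acting on components 2 and 3 of a triple. -/
noncomputable def Rinv23t {m n : ℕ} (K : Matrix (Fin n) (Fin m) ℝ) (p2 q2 p3 q3 : ℝ)
    (X : Mat m n × Mat m n × Mat m n) : Mat m n × Mat m n × Mat m n :=
  (X.1, Rinvmap K p2 q2 p3 q3 (X.2.1, X.2.2))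

/-!
The Lax factor `L(λ) = (λ - q) (1 - P) + (λ - p) P` of an idempotent `P` is singular only at
`λ = p`, where its kernel is the range of `P`, and at `λ = q`, where its range is that of `P`.
Hence a product of Lax factors with disjoint zeros determines its idempotents. For rank-one
idempotents the map `R` interchanges two Lax factors,
`L₁(P₁) L₂(P₂) = L₂(P₂') L₁(P₁')`, so both sides of the Yang–Baxter equation factor the same
product `L₁ L₂ L₃` in the order `L₃ L₂ L₁`, and therefore agree.

The rectangular case reduces to the square one with `K = 1`, since `X ↦ [X K, X; 0, 0]` turns the
product `X K Y` into the product of block matrices.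
-/

section LaxFactor

variable {𝕜 A : Type*} [Field 𝕜] [Ring A] [Algebra 𝕜 A]

/-- The Lax matrix `1 - (p - q) / (λ - q) P` of the idempotent `P`, multiplied by `λ - q` so that
it is defined for every value `l` of the spectral parameter `λ`. -/
def laxFactor (p q l : 𝕜) (P : A) : A :=
  (l - q) • (1 - P) + (l - p) • P

variable {p q l : 𝕜} {P Q : A}

theorem laxFactor_eq_sub (p q l : 𝕜) (P : A) :
    laxFactor p q l P = (l - q) • 1 - (p - q) • P := by
  unfold laxFactor
  module

theorem isUnit_laxFactor (hP : IsIdempotentElem P) (hp : l ≠ p) (hq : l ≠ q) :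
    IsUnit (laxFactor p q l P) := by
  have mul_spectral (a b c d : 𝕜) :
      (a • (1 - P) + b • P) * (c • (1 - P) + d • P) = (a * c) • (1 - P) + (b * d) • P := by
    simp only [add_mul, mul_add, smul_mul_smul_comm, hP.eq, hP.one_sub.eq, hP.mul_one_sub_self,
      hP.one_sub_mul_self, smul_zero, zero_add, add_zero]
  refine isUnit_iff_exists.2 ⟨(l - q)⁻¹ • (1 - P) + (l - p)⁻¹ • P, ?_, ?_⟩ <;>
    simp [laxFactor, mul_spectral, sub_ne_zero.2 hp, sub_ne_zero.2 hq]

theorem eq_of_laxFactor_mul_eq {Gp Gq Hp Hq : A} (hpq : p ≠ q) (hQ : IsIdempotentElem Q)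
    (hGp : IsUnit Gp) (hGq : IsUnit Gq) (hp : laxFactor p q p P * Gp = laxFactor p q p Q * Hp)
    (hq : laxFactor p q q P * Gq = laxFactor p q q Q * Hq) : P = Q := by
  have complement_eq : (1 - P) * Gp = (1 - Q) * Hp :=
    smul_right_injective A (sub_ne_zero.2 hpq) (by simpa [laxFactor] using hp)
  have image_eq : P * Gq = Q * Hq :=
    smul_right_injective A (sub_ne_zero.2 hpq.symm) (by simpa [laxFactor] using hq)
  have hQP : Q * (1 - P) = 0 := hGp.mul_left_eq_zero.1 <| by
    rw [mul_assoc, complement_eq, ← mul_assoc, hQ.mul_one_sub_self, zero_mul]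
  have hPQ : (1 - Q) * P = 0 := hGq.mul_left_eq_zero.1 <| by
    rw [mul_assoc, image_eq, ← mul_assoc, hQ.one_sub_mul_self, zero_mul]
  rw [mul_sub, mul_one, sub_eq_zero] at hQP
  rw [sub_mul, one_mul, sub_eq_zero] at hPQ
  rw [hPQ, ← hQP]

theorem eq_of_prod_laxFactor_eq {n : ℕ} {p q : Fin n → 𝕜} (hp : p.Injective) (hq : q.Injective)
    (hpq : ∀ i j, p i ≠ q j) {P Q : Fin n → A} (hP : ∀ i, IsIdempotentElem (P i))
    (hQ : ∀ i, IsIdempotentElem (Q i))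
    (h : ∀ l ∈ Set.range p ∪ Set.range q,
      (List.ofFn fun i => laxFactor (p i) (q i) l (P i)).prod =
        (List.ofFn fun i => laxFactor (p i) (q i) l (Q i)).prod) :
    P = Q := by
  induction n with
  | zero => exact Subsingleton.elim _ _
  | succ n ih =>
    simp only [List.ofFn_succ, List.prod_cons] at h
    have isUnit_tail {l : 𝕜} (hl : ∀ i : Fin n, l ≠ p i.succ ∧ l ≠ q i.succ) :
        IsUnit (List.ofFn fun i : Fin n => laxFactor (p i.succ) (q i.succ) l (P i.succ)).prod :=
      List.prod_isUnit <| (List.forall_mem_ofFn_iff ..).2 fun i =>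
        isUnit_laxFactor (hP _) (hl i).1 (hl i).2
    have head_eq : P 0 = Q 0 :=
      eq_of_laxFactor_mul_eq (hpq 0 0) (hQ 0)
        (isUnit_tail fun i => ⟨hp.ne i.succ_ne_zero.symm, hpq 0 i.succ⟩)
        (isUnit_tail fun i => ⟨(hpq i.succ 0).symm, hq.ne i.succ_ne_zero.symm⟩)
        (h _ (.inl ⟨0, rfl⟩)) (h _ (.inr ⟨0, rfl⟩))
    have tail_eq : (fun i : Fin n => P i.succ) = fun i => Q i.succ := by
      refine ih (hp.comp (Fin.succ_injective n)) (hq.comp (Fin.succ_injective n))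
        (fun i j => hpq i.succ j.succ) (fun i => hP i.succ) (fun i => hQ i.succ) ?_
      rintro _ (⟨i, rfl⟩ | ⟨i, rfl⟩)
      · refine (isUnit_laxFactor (hQ 0) (hp.ne i.succ_ne_zero) (hpq i.succ 0)).mul_left_cancel ?_
        simpa only [head_eq, Function.comp_apply] using h _ (.inl ⟨i.succ, rfl⟩)
      · refine (isUnit_laxFactor (hQ 0) (hpq 0 i.succ).symm
          (hq.ne i.succ_ne_zero)).mul_left_cancel ?_
        simpa only [head_eq, Function.comp_apply] using h _ (.inr ⟨i.succ, rfl⟩)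
    exact funext (Fin.cases head_eq (congrFun tail_eq))

end LaxFactor

section Refactorization

variable {𝕜 A : Type*} [Field 𝕜] [Ring A] [Algebra 𝕜 A]

/-- `(P₁', P₂')` interchanges the Lax factors of `(P₁, P₂)`, where `(p₁, q₁)` are the zeros
attached to `P₁` and `P₁'`, and `(p₂, q₂)` those attached to `P₂` and `P₂'`. -/
def IsRefactorization (p₁ q₁ p₂ q₂ : 𝕜) (P P' : A × A) : Prop :=
  ∀ l, laxFactor p₁ q₁ l P.1 * laxFactor p₂ q₂ l P.2 =
    laxFactor p₂ q₂ l P'.2 * laxFactor p₁ q₁ l P'.1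

theorem mul_mul_eq_of_exchanges {M : Type*} [Semigroup M]
    {x y z x₁ y₁ x₂ z₁ y₂ z₂ y₁' z₁' x₁' z₂' x₂' y₂' : M}
    (hxy : x * y = y₁ * x₁) (hxz : x₁ * z = z₁ * x₂) (hyz : y₁ * z₁ = z₂ * y₂)
    (hyz' : y * z = z₁' * y₁') (hxz' : x * z₁' = z₂' * x₁') (hxy' : x₁' * y₁' = y₂' * x₂') :
    z₂ * y₂ * x₂ = z₂' * y₂' * x₂' :=
  calc z₂ * y₂ * x₂ = x * y * z := by rw [← hyz, mul_assoc, ← hxz, ← mul_assoc, ← hxy]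
    _ = z₂' * y₂' * x₂' := by
      rw [mul_assoc, hyz', ← mul_assoc, hxz', mul_assoc, hxy', ← mul_assoc]

theorem eq_of_isRefactorization {p q : Fin 3 → 𝕜} (hp : p.Injective) (hq : q.Injective)
    (hpq : ∀ i j, p i ≠ q j) {P₁ P₂ P₃ U₁ U₂ U₃ V₁ V₂ V₃ U₁' U₂' U₃' V₁' V₂' V₃' : A}
    (hV : ∀ i, IsIdempotentElem (![V₁, V₂, V₃] i))
    (hV' : ∀ i, IsIdempotentElem (![V₁', V₂', V₃'] i))
    (h₁₂ : IsRefactorization (p 0) (q 0) (p 1) (q 1) (P₁, P₂) (U₁, U₂))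
    (h₁₃ : IsRefactorization (p 0) (q 0) (p 2) (q 2) (U₁, P₃) (V₁, U₃))
    (h₂₃ : IsRefactorization (p 1) (q 1) (p 2) (q 2) (U₂, U₃) (V₂, V₃))
    (h₂₃' : IsRefactorization (p 1) (q 1) (p 2) (q 2) (P₂, P₃) (U₂', U₃'))
    (h₁₃' : IsRefactorization (p 0) (q 0) (p 2) (q 2) (P₁, U₃') (U₁', V₃'))
    (h₁₂' : IsRefactorization (p 0) (q 0) (p 1) (q 1) (U₁', U₂') (V₁', V₂')) :
    ![V₁, V₂, V₃] = ![V₁', V₂', V₃'] := by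
  refine Fin.rev_surjective.injective_comp_right <| eq_of_prod_laxFactor_eq
    (hp.comp Fin.rev_injective) (hq.comp Fin.rev_injective) (fun i j => hpq i.rev j.rev)
    (fun i => hV i.rev) (fun i => hV' i.rev) fun l _ => ?_
  simpa [List.ofFn_succ, mul_assoc] using
    mul_mul_eq_of_exchanges (h₁₂ l) (h₁₃ l) (h₂₃ l) (h₂₃' l) (h₁₃' l) (h₁₂' l)

variable {p₁ q₁ p₂ q₂ t : 𝕜} {P₁ P₂ P₁' P₂' : A}

-- `hadd` compares the coefficients of `l`; `hmul` is the identity at `l = q₁`, with the factor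
-- `p₁ - q₁` cancelled.
theorem isRefactorization_of_add_eq_of_mul_eq
    (hadd : (p₁ - q₁) • P₁' + (p₂ - q₂) • P₂' = (p₁ - q₁) • P₁ + (p₂ - q₂) • P₂)
    (hmul : (p₂ - q₂) • (P₂' * P₁' - P₁ * P₂) = (q₁ - q₂) • (P₁' - P₁)) :
    IsRefactorization p₁ q₁ p₂ q₂ (P₁, P₂) (P₁', P₂') := by
  intro l
  simp only [laxFactor_eq_sub, sub_mul, mul_sub, smul_mul_assoc, mul_smul_comm, one_mul, mul_one]
  linear_combination (norm := module) (l - q₁) • hadd - (p₁ - q₁) • hmul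

/-- The scalar `α₁₂⁻¹`, as a function of `t = tr (P₁ P₂)`. -/
def refactorDenom (p₁ q₁ p₂ q₂ t : 𝕜) : 𝕜 :=
  1 - (p₁ - q₁) * (p₂ - q₂) / ((p₂ - p₁) * (q₂ - q₁)) * t

theorem refactorDenom_swap (p₁ q₁ p₂ q₂ t : 𝕜) :
    refactorDenom p₁ q₁ p₂ q₂ t = refactorDenom q₂ p₂ q₁ p₁ t := by
  rw [refactorDenom, refactorDenom]
  ring

/-- The first component of the map `R` for `K = 1`, without the factor `α₁₂`. Exchanging
`(p₁, q₁)` with `(q₂, p₂)` and `P₁` with `P₂` gives the second component. -/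
def dressing (p₁ q₁ p₂ q₂ : 𝕜) (P₁ P₂ : A) : A :=
  (1 - ((p₂ - q₂) / (p₂ - p₁)) • P₂) * P₁ * (1 - ((p₂ - q₂) / (q₁ - q₂)) • P₂)

theorem dressing_eq (p₁ q₁ p₂ q₂ : 𝕜) (h : P₂ * P₁ * P₂ = t • P₂) :
    dressing p₁ q₁ p₂ q₂ P₁ P₂ =
      P₁ - ((p₂ - q₂) / (p₂ - p₁)) • (P₂ * P₁) - ((p₂ - q₂) / (q₁ - q₂)) • (P₁ * P₂) +
        ((p₂ - q₂) / (p₂ - p₁) * ((p₂ - q₂) / (q₁ - q₂)) * t) • P₂ := by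
  simp only [dressing, sub_mul, mul_sub, one_mul, mul_one, smul_mul_assoc, mul_smul_comm, h]
  module

theorem smul_dressing_add_smul_dressing (hp : p₁ ≠ p₂) (hq : q₁ ≠ q₂)
    (h₁ : P₁ * P₂ * P₁ = t • P₁) (h₂ : P₂ * P₁ * P₂ = t • P₂) :
    (p₁ - q₁) • dressing p₁ q₁ p₂ q₂ P₁ P₂ + (p₂ - q₂) • dressing q₂ p₂ q₁ p₁ P₂ P₁ =
      refactorDenom p₁ q₁ p₂ q₂ t • ((p₁ - q₁) • P₁ + (p₂ - q₂) • P₂) := by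
  rw [dressing_eq _ _ _ _ h₂, dressing_eq _ _ _ _ h₁, refactorDenom]
  match_scalars <;> field_simp <;> ring

theorem dressing_mul_dressing (hp : p₁ ≠ p₂) (hq : q₁ ≠ q₂) (hP₁ : IsIdempotentElem P₁)
    (hP₂ : IsIdempotentElem P₂) (h₁ : P₁ * P₂ * P₁ = t • P₁) (h₂ : P₂ * P₁ * P₂ = t • P₂) :
    dressing q₂ p₂ q₁ p₁ P₂ P₁ * dressing p₁ q₁ p₂ q₂ P₁ P₂ =
      (refactorDenom p₁ q₁ p₂ q₂ t * ((q₂ - q₁) / (p₂ - p₁))) •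
        (P₂ * P₁ - ((q₁ - p₁) / (q₁ - q₂) * t) • P₁ - ((p₂ - q₂) / (q₁ - q₂) * t) • P₂ +
          ((q₁ - p₁) / (q₁ - q₂) * ((p₂ - q₂) / (q₁ - q₂)) * t) • (P₁ * P₂)) := by
  have middle_eq :
      P₂ * (1 - ((q₁ - p₁) / (p₂ - p₁)) • P₁) * ((1 - ((p₂ - q₂) / (p₂ - p₁)) • P₂) * P₁) =
        (refactorDenom p₁ q₁ p₂ q₂ t * ((q₂ - q₁) / (p₂ - p₁))) • (P₂ * P₁) := by
    have hP₂₁ : P₂ * P₁ * (P₂ * P₁) = t • (P₂ * P₁) := by rw [← mul_assoc, h₂, smul_mul_assoc]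
    have hP₁' : P₂ * P₁ * P₁ = P₂ * P₁ := by rw [mul_assoc, hP₁.eq]
    have hP₂' : P₂ * (P₂ * P₁) = P₂ * P₁ := by rw [← mul_assoc, hP₂.eq]
    simp only [mul_sub, sub_mul, mul_one, one_mul, mul_smul_comm, smul_mul_assoc, hP₁', hP₂', hP₂₁,
      refactorDenom]
    match_scalars
    field_simp
    ring
  calc dressing q₂ p₂ q₁ p₁ P₂ P₁ * dressing p₁ q₁ p₂ q₂ P₁ P₂
      = (1 - ((q₁ - p₁) / (q₁ - q₂)) • P₁) *
          (P₂ * (1 - ((q₁ - p₁) / (p₂ - p₁)) • P₁) *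
            ((1 - ((p₂ - q₂) / (p₂ - p₁)) • P₂) * P₁)) *
          (1 - ((p₂ - q₂) / (q₁ - q₂)) • P₂) := by simp only [dressing, mul_assoc]
    _ = _ := by
      rw [middle_eq]
      simp only [mul_sub, sub_mul, mul_one, one_mul, mul_smul_comm, smul_mul_assoc,
        ← mul_assoc, h₁, h₂]
      module

theorem isRefactorization_dressing (hp : p₁ ≠ p₂) (hq : q₁ ≠ q₂) (hP₁ : IsIdempotentElem P₁)
    (hP₂ : IsIdempotentElem P₂) (h₁ : P₁ * P₂ * P₁ = t • P₁) (h₂ : P₂ * P₁ * P₂ = t • P₂)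
    (hd : refactorDenom p₁ q₁ p₂ q₂ t ≠ 0) :
    IsRefactorization p₁ q₁ p₂ q₂ (P₁, P₂)
      ((refactorDenom p₁ q₁ p₂ q₂ t)⁻¹ • dressing p₁ q₁ p₂ q₂ P₁ P₂,
        (refactorDenom p₁ q₁ p₂ q₂ t)⁻¹ • dressing q₂ p₂ q₁ p₁ P₂ P₁) := by
  apply isRefactorization_of_add_eq_of_mul_eq
  · rw [smul_comm, smul_comm (p₂ - q₂), ← smul_add, smul_dressing_add_smul_dressing hp hq h₁ h₂,
      inv_smul_smul₀ hd]
  · have denom_mul : refactorDenom p₁ q₁ p₂ q₂ t * ((p₂ - p₁) * (q₂ - q₁)) =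
        (p₂ - p₁) * (q₂ - q₁) - (p₁ - q₁) * (p₂ - q₂) * t := by
      rw [refactorDenom]
      field_simp
    rw [smul_mul_smul_comm, dressing_mul_dressing hp hq hP₁ hP₂ h₁ h₂, dressing_eq _ _ _ _ h₂]
    match_scalars <;> field_simp
    · ring
    · linear_combination (q₂ - q₁) * denom_mul
    · ring
    · linear_combination -(p₂ - q₂) * (q₂ - q₁) * denom_mul

end Refactorization

section RankOne

variable {m n 𝕜 : Type*} [Fintype n] [Field 𝕜]

theorem exists_eq_vecMulVec_of_rank_le_one {X : Matrix m n 𝕜} (hX : X.rank ≤ 1) :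
    ∃ u v, X = vecMulVec u v := by
  classical
  obtain ⟨u, hu⟩ := finrank_le_one_iff.1 hX
  choose v hv using fun j => hu ⟨X.mulVecLin (Pi.single j 1), LinearMap.mem_range_self _ _⟩
  refine ⟨u, v, Matrix.ext fun i j => ?_⟩
  simpa [vecMulVec_apply, mul_comm] using (congrFun (congrArg Subtype.val (hv j)) i).symm

theorem mul_mul_eq_trace_smul_of_rank_le_one [Fintype m] {X : Matrix m n 𝕜} (hX : X.rank ≤ 1)
    (B : Matrix n m 𝕜) : X * B * X = (B * X).trace • X := by
  obtain ⟨u, v, rfl⟩ := exists_eq_vecMulVec_of_rank_le_one hX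
  rw [vecMulVec_mul, vecMulVec_mul_vecMulVec, mul_vecMulVec, trace_vecMulVec, ← dotProduct_mulVec,
    dotProduct_comm, vecMulVec_smul]

/-- A rank-one idempotent. For a matrix `P` of rank at most one, `P * P = tr P • P`, so that
idempotency is encoded as `tr P = 1`. -/
structure IsRankOneProj (P : Matrix n n 𝕜) : Prop where
  rank_le_one : P.rank ≤ 1
  trace_eq_one : P.trace = 1

variable {P P₁ P₂ : Matrix n n 𝕜}

namespace IsRankOneProj

theorem isIdempotentElem (hP : IsRankOneProj P) : IsIdempotentElem P := by
  classical
  have := mul_mul_eq_trace_smul_of_rank_le_one hP.rank_le_one 1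
  rwa [mul_one, one_mul, hP.trace_eq_one, one_smul] at this

variable [DecidableEq n]

theorem trace_dressing {p₁ q₁ p₂ q₂ : 𝕜} (hp : p₁ ≠ p₂) (hq : q₁ ≠ q₂)
    (h₁ : IsRankOneProj P₁) (h₂ : IsRankOneProj P₂) :
    (dressing p₁ q₁ p₂ q₂ P₁ P₂).trace = refactorDenom p₁ q₁ p₂ q₂ (P₁ * P₂).trace := by
  have hP₂ : P₂ * P₁ * P₂ = (P₁ * P₂).trace • P₂ :=
    mul_mul_eq_trace_smul_of_rank_le_one h₂.rank_le_one P₁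
  rw [dressing_eq _ _ _ _ hP₂, refactorDenom]
  simp only [trace_add, trace_sub, trace_smul, trace_mul_comm P₂ P₁, h₁.trace_eq_one,
    h₂.trace_eq_one, smul_eq_mul]
  field_simp
  ring

theorem smul_dressing {p₁ q₁ p₂ q₂ : 𝕜} (hp : p₁ ≠ p₂) (hq : q₁ ≠ q₂)
    (h₁ : IsRankOneProj P₁) (h₂ : IsRankOneProj P₂)
    (hd : refactorDenom p₁ q₁ p₂ q₂ (P₁ * P₂).trace ≠ 0) :
    IsRankOneProj ((refactorDenom p₁ q₁ p₂ q₂ (P₁ * P₂).trace)⁻¹ •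
      dressing p₁ q₁ p₂ q₂ P₁ P₂) where
  rank_le_one := by
    rw [dressing, ← Matrix.smul_mul, ← Matrix.smul_mul]
    exact (rank_mul_le_left _ _).trans <| (rank_mul_le_right _ _).trans h₁.rank_le_one
  trace_eq_one := by
    rw [trace_smul, trace_dressing hp hq h₁ h₂, smul_eq_mul, inv_mul_cancel₀ hd]

end IsRankOneProj

end RankOne

section BlockEmbedding

variable {m n 𝕜 : Type*} [Fintype n] [Field 𝕜]

/-- The block matrix `[X K, X; 0, 0]`. It turns the product `X K Y` of `m × n` matrices into the
product of square matrices. -/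
def blockEmbedding (K : Matrix n m 𝕜) : Matrix m n 𝕜 →ₗ[𝕜] Matrix (m ⊕ n) (m ⊕ n) 𝕜 where
  toFun X := fromBlocks (X * K) X 0 0
  map_add' X Y := by simp [Matrix.add_mul, fromBlocks_add]
  map_smul' c X := by simp [fromBlocks_smul]

variable (K : Matrix n m 𝕜) (X Y : Matrix m n 𝕜)

theorem blockEmbedding_injective : Function.Injective (blockEmbedding K) :=
  fun _ _ h => (fromBlocks_inj.1 h).2.1

variable [Fintype m]

theorem blockEmbedding_mul : blockEmbedding K X * blockEmbedding K Y =
    blockEmbedding K (X * K * Y) := by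
  simp [blockEmbedding, fromBlocks_multiply, Matrix.mul_assoc]

theorem trace_blockEmbedding : (blockEmbedding K X).trace = (X * K).trace := by
  simp [blockEmbedding, trace, Fintype.sum_sum_type]

theorem rank_blockEmbedding_le : (blockEmbedding K X).rank ≤ X.rank := by
  classical
  have factorization : blockEmbedding K X =
      fromRows (1 : Matrix m m 𝕜) (0 : Matrix n m 𝕜) * (X * fromCols K (1 : Matrix n n 𝕜)) := by
    simp [blockEmbedding, fromRows_mul, mul_fromCols, ← fromRows_fromCols_eq_fromBlocks]
  rw [factorization]
  exact (rank_mul_le_right _ _).trans (rank_mul_le_left _ _)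

variable [DecidableEq m] [DecidableEq n]

theorem blockEmbedding_one_sub_smul_mul_mul_one_sub_smul (a b : 𝕜) :
    blockEmbedding K ((1 - a • (Y * K)) * X * (1 - b • (K * Y))) =
      (1 - a • blockEmbedding K Y) * blockEmbedding K X * (1 - b • blockEmbedding K Y) := by
  simp only [Matrix.sub_mul, Matrix.mul_sub, Matrix.one_mul, Matrix.mul_one, Matrix.smul_mul,
    Matrix.mul_smul, map_sub, map_smul, blockEmbedding_mul, Matrix.mul_assoc]

end BlockEmbedding

section YangBaxter

variable {m n : ℕ} {K : Matrix (Fin n) (Fin m) ℝ}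

theorem InS.isRankOneProj_blockEmbedding {X : Mat m n} (hX : InS K X) :
    IsRankOneProj (blockEmbedding K X) where
  rank_le_one := (rank_blockEmbedding_le K X).trans hX.2.le
  trace_eq_one := by
    have hX₀ : X ≠ 0 := by
      rintro rfl
      simpa using hX.2
    have trace_smul_eq : (K * X).trace • X = (1 : ℝ) • X := by
      rw [← mul_mul_eq_trace_smul_of_rank_le_one hX.2.le, hX.1, one_smul]
    rw [trace_blockEmbedding, trace_mul_comm]
    exact smul_left_injective ℝ hX₀ trace_smul_eq

variable (K) (p₁ q₁ p₂ q₂ : ℝ) (X₁ X₂ : Mat m n)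

theorem adenom_eq_refactorDenom : adenom K p₁ q₁ p₂ q₂ X₁ X₂ =
    refactorDenom p₁ q₁ p₂ q₂ (blockEmbedding K X₁ * blockEmbedding K X₂).trace := by
  rw [blockEmbedding_mul, trace_blockEmbedding, trace_mul_comm, adenom, refactorDenom]
  simp only [Matrix.mul_assoc]

theorem blockEmbedding_Rmap_fst : blockEmbedding K (Rmap K p₁ q₁ p₂ q₂ (X₁, X₂)).1 =
    (refactorDenom p₁ q₁ p₂ q₂ (blockEmbedding K X₁ * blockEmbedding K X₂).trace)⁻¹ •
      dressing p₁ q₁ p₂ q₂ (blockEmbedding K X₁) (blockEmbedding K X₂) := by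
  rw [Rmap, map_smul, adenom_eq_refactorDenom, blockEmbedding_one_sub_smul_mul_mul_one_sub_smul,
    dressing]

theorem blockEmbedding_Rmap_snd : blockEmbedding K (Rmap K p₁ q₁ p₂ q₂ (X₁, X₂)).2 =
    (refactorDenom p₁ q₁ p₂ q₂ (blockEmbedding K X₁ * blockEmbedding K X₂).trace)⁻¹ •
      dressing q₂ p₂ q₁ p₁ (blockEmbedding K X₂) (blockEmbedding K X₁) := by
  have left_coeff : (p₁ - q₁) / (q₂ - q₁) = (q₁ - p₁) / (q₁ - q₂) := by
    rw [← neg_sub q₁, ← neg_sub q₁, neg_div_neg_eq]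
  have right_coeff : (p₁ - q₁) / (p₁ - p₂) = (q₁ - p₁) / (p₂ - p₁) := by
    rw [← neg_sub q₁, ← neg_sub p₂, neg_div_neg_eq]
  rw [Rmap, map_smul, adenom_eq_refactorDenom, blockEmbedding_one_sub_smul_mul_mul_one_sub_smul,
    dressing, left_coeff, right_coeff]

variable {p₁ q₁ p₂ q₂ X₁ X₂}

theorem isRankOneProj_blockEmbedding_Rmap (hp : p₁ ≠ p₂) (hq : q₁ ≠ q₂)
    (h₁ : IsRankOneProj (blockEmbedding K X₁)) (h₂ : IsRankOneProj (blockEmbedding K X₂))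
    (hd : adenom K p₁ q₁ p₂ q₂ X₁ X₂ ≠ 0) :
    IsRankOneProj (blockEmbedding K (Rmap K p₁ q₁ p₂ q₂ (X₁, X₂)).1) ∧
      IsRankOneProj (blockEmbedding K (Rmap K p₁ q₁ p₂ q₂ (X₁, X₂)).2) := by
  rw [adenom_eq_refactorDenom] at hd
  refine ⟨?_, ?_⟩
  · rw [blockEmbedding_Rmap_fst]
    exact h₁.smul_dressing hp hq h₂ hd
  · rw [blockEmbedding_Rmap_snd]
    rw [refactorDenom_swap, trace_mul_comm] at hd ⊢
    exact h₂.smul_dressing hq.symm hp.symm h₁ hd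

theorem isRefactorization_blockEmbedding_Rmap (hp : p₁ ≠ p₂) (hq : q₁ ≠ q₂)
    (h₁ : IsRankOneProj (blockEmbedding K X₁)) (h₂ : IsRankOneProj (blockEmbedding K X₂))
    (hd : adenom K p₁ q₁ p₂ q₂ X₁ X₂ ≠ 0) :
    IsRefactorization p₁ q₁ p₂ q₂ (blockEmbedding K X₁, blockEmbedding K X₂)
      (blockEmbedding K (Rmap K p₁ q₁ p₂ q₂ (X₁, X₂)).1,
        blockEmbedding K (Rmap K p₁ q₁ p₂ q₂ (X₁, X₂)).2) := by
  rw [adenom_eq_refactorDenom] at hd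
  rw [blockEmbedding_Rmap_fst, blockEmbedding_Rmap_snd]
  refine isRefactorization_dressing hp hq h₁.isIdempotentElem h₂.isIdempotentElem ?_
    (mul_mul_eq_trace_smul_of_rank_le_one h₂.rank_le_one _) hd
  rw [trace_mul_comm]
  exact mul_mul_eq_trace_smul_of_rank_le_one h₁.rank_le_one _

theorem R_is_YangBaxter_general {p q : Fin 3 → ℝ} (hp : p.Injective) (hq : q.Injective)
    (hpq : ∀ i j, p i ≠ q j)
    {X₁ X₂ X₃ : Mat m n} (hX₁ : InS K X₁) (hX₂ : InS K X₂) (hX₃ : InS K X₃)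
    {U V U' V' : Mat m n × Mat m n × Mat m n}
    (hU : U = R12t K (p 0) (q 0) (p 1) (q 1) (X₁, X₂, X₃))
    (hV : V = R13t K (p 0) (q 0) (p 2) (q 2) U)
    (hU' : U' = R23t K (p 1) (q 1) (p 2) (q 2) (X₁, X₂, X₃))
    (hV' : V' = R13t K (p 0) (q 0) (p 2) (q 2) U')
    (ha₁₂ : adenom K (p 0) (q 0) (p 1) (q 1) X₁ X₂ ≠ 0)
    (ha₁₃ : adenom K (p 0) (q 0) (p 2) (q 2) U.1 U.2.2 ≠ 0)
    (ha₂₃ : adenom K (p 1) (q 1) (p 2) (q 2) V.2.1 V.2.2 ≠ 0)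
    (ha₂₃' : adenom K (p 1) (q 1) (p 2) (q 2) X₂ X₃ ≠ 0)
    (ha₁₃' : adenom K (p 0) (q 0) (p 2) (q 2) U'.1 U'.2.2 ≠ 0)
    (ha₁₂' : adenom K (p 0) (q 0) (p 1) (q 1) V'.1 V'.2.1 ≠ 0) :
    R23t K (p 1) (q 1) (p 2) (q 2) V = R12t K (p 0) (q 0) (p 1) (q 1) V' := by
  subst hU hV hU' hV'
  have rankOne {i j : Fin 3} (hij : i ≠ j) {Y Z : Mat m n} :=
    isRankOneProj_blockEmbedding_Rmap K (X₁ := Y) (X₂ := Z) (hp.ne hij) (hq.ne hij)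
  have refactor {i j : Fin 3} (hij : i ≠ j) {Y Z : Mat m n} :=
    isRefactorization_blockEmbedding_Rmap K (X₁ := Y) (X₂ := Z) (hp.ne hij) (hq.ne hij)
  have h₁ := hX₁.isRankOneProj_blockEmbedding
  have h₂ := hX₂.isRankOneProj_blockEmbedding
  have h₃ := hX₃.isRankOneProj_blockEmbedding
  obtain ⟨hU₁, hU₂⟩ := rankOne (by decide) h₁ h₂ ha₁₂
  obtain ⟨hV₁, hU₃⟩ := rankOne (by decide) hU₁ h₃ ha₁₃
  obtain ⟨hV₂, hV₃⟩ := rankOne (by decide) hU₂ hU₃ ha₂₃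
  obtain ⟨hU₂', hU₃'⟩ := rankOne (by decide) h₂ h₃ ha₂₃'
  obtain ⟨hU₁', hV₃'⟩ := rankOne (by decide) h₁ hU₃' ha₁₃'
  obtain ⟨hV₁', hV₂'⟩ := rankOne (by decide) hU₁' hU₂' ha₁₂'
  have images_eq := eq_of_isRefactorization hp hq hpq
    (by simp [Fin.forall_fin_succ, hV₁.isIdempotentElem, hV₂.isIdempotentElem,
      hV₃.isIdempotentElem])
    (by simp [Fin.forall_fin_succ, hV₁'.isIdempotentElem, hV₂'.isIdempotentElem,
      hV₃'.isIdempotentElem])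
    (refactor (by decide) h₁ h₂ ha₁₂) (refactor (by decide) hU₁ h₃ ha₁₃)
    (refactor (by decide) hU₂ hU₃ ha₂₃) (refactor (by decide) h₂ h₃ ha₂₃')
    (refactor (by decide) h₁ hU₃' ha₁₃') (refactor (by decide) hU₁' hU₂' ha₁₂')
  have components_eq (i : Fin 3) := congrFun images_eq i
  exact Prod.ext (blockEmbedding_injective K (components_eq 0)) <|
    Prod.ext (blockEmbedding_injective K (components_eq 1))
      (blockEmbedding_injective K (components_eq 2))

end YangBaxter

/-- `R` is a (parameter-dependent) Yang–Baxter map. -/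
theorem R_is_YangBaxter
    (m n : ℕ) (hm : 0 < m) (hn : 0 < n)
    (K : Matrix (Fin n) (Fin m) ℝ) (hK : K.rank = min n m)
    (p1 q1 p2 q2 p3 q3 : ℝ)
    (hp : List.Pairwise (· ≠ ·) [p1, p2, p3])
    (hq : List.Pairwise (· ≠ ·) [q1, q2, q3])
    (hpq11 : p1 ≠ q1) (hpq12 : p1 ≠ q2) (hpq13 : p1 ≠ q3)
    (hpq21 : p2 ≠ q1) (hpq22 : p2 ≠ q2) (hpq23 : p2 ≠ q3)
    (hpq31 : p3 ≠ q1) (hpq32 : p3 ≠ q2) (hpq33 : p3 ≠ q3)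
    (X1 X2 X3 : Mat m n) (hX1 : InS K X1) (hX2 : InS K X2) (hX3 : InS K X3)
    -- intermediate triples of the two compositions
    (U V U' V' : Mat m n × Mat m n × Mat m n)
    (hU : U = R12t K p1 q1 p2 q2 (X1, X2, X3))
    (hV : V = R13t K p1 q1 p3 q3 U)
    (hU' : U' = R23t K p2 q2 p3 q3 (X1, X2, X3))
    (hV' : V' = R13t K p1 q1 p3 q3 U')
    -- every α-factor occurring in the compositions is well defined and nonzero
    (ha1 : adenom K p1 q1 p2 q2 X1 X2 ≠ 0)
    (ha2 : adenom K p1 q1 p3 q3 U.1 U.2.2 ≠ 0)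
    (ha3 : adenom K p2 q2 p3 q3 V.2.1 V.2.2 ≠ 0)
    (ha4 : adenom K p2 q2 p3 q3 X2 X3 ≠ 0)
    (ha5 : adenom K p1 q1 p3 q3 U'.1 U'.2.2 ≠ 0)
    (ha6 : adenom K p1 q1 p2 q2 V'.1 V'.2.1 ≠ 0) :
    R23t K p2 q2 p3 q3 V = R12t K p1 q1 p2 q2 V' := by
  exact R_is_YangBaxter_general K (p := ![p1, p2, p3]) (q := ![q1, q2, q3])
    (List.nodup_ofFn.1 hp) (List.nodup_ofFn.1 hq) (by simp [Fin.forall_fin_succ, *])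
    hX1 hX2 hX3 hU hV hU' hV' ha1 ha2 ha3 ha4 ha5 ha6
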